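/- arXiv:2401.15437 — 2 statements merged into one kernel-verified Lean document; each statement's English description precedes it below -/
import Mathlib

section
/- Let n ≥ 3 be an integer and let ε = 0 if n is odd and ε = 1 if n is even. Then the width w(n,2) of the Bruhat order of A(n,2) satisfies w(n,2) ≥ |A(n,2)| / (2n(n−2) + ε). -/
open Finset

/-- A matrix of zeros and ones. -/
def ZeroOne {m n : ℕ} (A : Matrix (Fin m) (Fin n) ℕ) : Prop :=
  ∀ i j, A i j = 0 ∨ A i j = 1

/-- Sum of the entries of row `i`. -/
def rowSum {m n : ℕ} (A : Matrix (Fin m) (Fin n) ℕ) (i : Fin m) : ℕ :=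
  ∑ j, A i j

/-- Sum of the entries of column `j`. -/
def colSum {m n : ℕ} (A : Matrix (Fin m) (Fin n) ℕ) (j : Fin n) : ℕ :=
  ∑ i, A i j

/-- The class `A(R,S)` of (0,1)-matrices with row sum vector `R` and
column sum vector `S`. -/
def classRS {m n : ℕ} (R : Fin m → ℕ) (S : Fin n → ℕ) :
    Set (Matrix (Fin m) (Fin n) ℕ) :=
  {A | ZeroOne A ∧ (∀ i, rowSum A i = R i) ∧ (∀ j, colSum A j = S j)}

/-- The class `A(n,k)` of square (0,1)-matrices of order `n` with all row
and column sums equal to `k`. -/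
def classA (n k : ℕ) : Set (Matrix (Fin n) (Fin n) ℕ) :=
  classRS (fun _ => k) (fun _ => k)

/-- `sigmaM A i j` is the sum of the entries of the leading submatrix of `A`
on rows `0,…,i` and columns `0,…,j` (0-based), i.e. `σ_{i+1,j+1}(A)` in
1-based notation. -/
def sigmaM {m n : ℕ} (A : Matrix (Fin m) (Fin n) ℕ) (i : Fin m) (j : Fin n) : ℕ :=
  ∑ k ∈ Finset.univ.filter (fun k : Fin m => k ≤ i),
    ∑ l ∈ Finset.univ.filter (fun l : Fin n => l ≤ j), A k l

/-- The Bruhat order: `A ⪯_B C` iff `σ_{ij}(A) ≥ σ_{ij}(C)` for all `i, j`. -/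
def brle {m n : ℕ} (A C : Matrix (Fin m) (Fin n) ℕ) : Prop :=
  ∀ i j, sigmaM C i j ≤ sigmaM A i j

/-- Incomparability in the Bruhat order. -/
def Incomp {m n : ℕ} (A C : Matrix (Fin m) (Fin n) ℕ) : Prop :=
  ¬ brle A C ∧ ¬ brle C A

/-- A set of matrices that is an antichain in the Bruhat order. -/
def IsAntichainB {m n : ℕ} (D : Set (Matrix (Fin m) (Fin n) ℕ)) : Prop :=
  ∀ A ∈ D, ∀ C ∈ D, A ≠ C → Incomp A C

/-- The number of inversions of a (0,1)-matrix: pairs of `1` entries, one of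
which is strictly to the top-right of the other (each unordered pair counted
once, via the representative whose first member is in the lower-indexed row). -/
def nu {m n : ℕ} (A : Matrix (Fin m) (Fin n) ℕ) : ℕ :=
  (Finset.univ.filter (fun p : (Fin m × Fin n) × (Fin m × Fin n) =>
      p.1.1 < p.2.1 ∧ p.2.2 < p.1.2 ∧ A p.1.1 p.1.2 = 1 ∧ A p.2.1 p.2.2 = 1)).card

/-- The conjugate of a matrix: columns in reversed (left-right flipped) order. -/
def conjM {m n : ℕ} (A : Matrix (Fin m) (Fin n) ℕ) : Matrix (Fin m) (Fin n) ℕ :=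
  Matrix.of fun i j => A i j.rev

/-- Bilinear form of the inversion number. -/
def biN {n : ℕ} (A B : Matrix (Fin n) (Fin n) ℕ) : ℕ :=
  ∑ i, ∑ j, ∑ k, ∑ l, if i < k ∧ l < j then A i j * B k l else 0

def lowT {n : ℕ} (A : Matrix (Fin n) (Fin n) ℕ) (i j : Fin n) : ℕ :=
  ∑ k, ∑ l, if i < k ∧ l < j then A k l else 0

def upU {n : ℕ} (A : Matrix (Fin n) (Fin n) ℕ) (k l : Fin n) : ℕ :=
  ∑ i, ∑ j, if i < k ∧ l < j then A i j else 0

def preP {n : ℕ} (A : Matrix (Fin n) (Fin n) ℕ) (i j : Fin n) : ℕ :=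
  ∑ k, ∑ l, if k ≤ i ∧ l < j then A k l else 0

def preQ {n : ℕ} (A : Matrix (Fin n) (Fin n) ℕ) (k l : Fin n) : ℕ :=
  ∑ i, ∑ j, if i < k ∧ j ≤ l then A i j else 0

lemma nu_eq_biN {n : ℕ} (A : Matrix (Fin n) (Fin n) ℕ) (h : ZeroOne A) :
    nu A = biN A A := by
  unfold nu biN
  rw [Finset.card_filter]
  simp only [Fintype.sum_prod_type]
  refine Finset.sum_congr rfl fun i _ => Finset.sum_congr rfl fun j _ =>
    Finset.sum_congr rfl fun k _ => Finset.sum_congr rfl fun l _ => ?_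
  rcases h i j with h1 | h1 <;> rcases h k l with h2 | h2 <;> simp [h1, h2]

lemma biN_left {n : ℕ} (A B : Matrix (Fin n) (Fin n) ℕ) :
    biN A B = ∑ i, ∑ j, A i j * lowT B i j := by
  unfold biN lowT
  simp only [Finset.mul_sum, mul_ite, mul_zero]

lemma biN_right {n : ℕ} (A B : Matrix (Fin n) (Fin n) ℕ) :
    biN A B = ∑ k, ∑ l, B k l * upU A k l := by
  unfold biN upU
  simp only [Finset.mul_sum, mul_ite, mul_zero]
  have h1 : ∀ i : Fin n, (∑ j, ∑ k, ∑ l, if i < k ∧ l < j then A i j * B k l else 0)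
      = ∑ k, ∑ l, ∑ j, if i < k ∧ l < j then A i j * B k l else 0 := by
    intro i
    rw [Finset.sum_comm]
    refine Finset.sum_congr rfl fun k _ => ?_
    rw [Finset.sum_comm]
  rw [Finset.sum_congr rfl fun i _ => h1 i, Finset.sum_comm]
  refine Finset.sum_congr rfl fun k _ => ?_
  rw [Finset.sum_comm]
  refine Finset.sum_congr rfl fun l _ => Finset.sum_congr rfl fun i _ =>
    Finset.sum_congr rfl fun j _ => ?_
  rw [mul_comm]

lemma lowT_add {n : ℕ} (A : Matrix (Fin n) (Fin n) ℕ) (hA : A ∈ classA n 2) (i j : Fin n) :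
    lowT A i j + preP A i j = ∑ l : Fin n, if l < j then 2 else 0 := by
  unfold lowT preP
  rw [← Finset.sum_add_distrib]
  simp only [← Finset.sum_add_distrib]
  rw [Finset.sum_comm]
  refine Finset.sum_congr rfl fun l _ => ?_
  have h : ∑ k, A k l = 2 := hA.2.2 l
  split_ifs with hl
  · rw [← h]
    refine Finset.sum_congr rfl fun k _ => ?_
    by_cases hk : i < k
    · simp [hk, hl]
    · simp [hk, hl, not_lt.mp hk]
  · simp [hl]

lemma upU_add {n : ℕ} (A : Matrix (Fin n) (Fin n) ℕ) (hA : A ∈ classA n 2) (k l : Fin n) :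
    upU A k l + preQ A k l = ∑ i : Fin n, if i < k then 2 else 0 := by
  unfold upU preQ
  rw [← Finset.sum_add_distrib]
  simp only [← Finset.sum_add_distrib]
  refine Finset.sum_congr rfl fun i _ => ?_
  have h : ∑ l, A i l = 2 := hA.2.1 i
  split_ifs with hl
  · rw [← h]
    refine Finset.sum_congr rfl fun j _ => ?_
    by_cases hk : l < j
    · simp [hk, hl]
    · simp [hk, hl, not_lt.mp hk]
  · simp [hl]

lemma sigmaM_eq {n : ℕ} (A : Matrix (Fin n) (Fin n) ℕ) (i j : Fin n) :
    sigmaM A i j = ∑ k, ∑ l, if k ≤ i ∧ l ≤ j then A k l else 0 := by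
  unfold sigmaM
  rw [Finset.sum_filter]
  refine Finset.sum_congr rfl fun k _ => ?_
  split_ifs with hk
  · rw [Finset.sum_filter]
    simp [hk]
  · simp [hk]

lemma preP_le {n : ℕ} {A C : Matrix (Fin n) (Fin n) ℕ} (h : brle A C) (i j : Fin n) :
    preP C i j ≤ preP A i j := by
  by_cases hj : j.val = 0
  · have : ∀ l : Fin n, ¬ l < j := by
      intro l hl
      have := Fin.lt_def.mp hl
      omega
    simp [preP, this]
  · have hj' : j.val - 1 < n := by omega
    have key : ∀ B : Matrix (Fin n) (Fin n) ℕ, preP B i j = sigmaM B i ⟨j.val - 1, hj'⟩ := by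
      intro B
      rw [sigmaM_eq]
      unfold preP
      refine Finset.sum_congr rfl fun k _ => Finset.sum_congr rfl fun l _ => ?_
      have : l < j ↔ l ≤ ⟨j.val - 1, hj'⟩ := by
        rw [Fin.lt_def, Fin.le_def]
        simp only
        omega
      simp [this]
    rw [key, key]
    exact h _ _

lemma preQ_le {n : ℕ} {A C : Matrix (Fin n) (Fin n) ℕ} (h : brle A C) (i j : Fin n) :
    preQ C i j ≤ preQ A i j := by
  by_cases hj : i.val = 0
  · have : ∀ l : Fin n, ¬ l < i := by
      intro l hl
      have := Fin.lt_def.mp hl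
      omega
    simp [preQ, this]
  · have hj' : i.val - 1 < n := by omega
    have key : ∀ B : Matrix (Fin n) (Fin n) ℕ, preQ B i j = sigmaM B ⟨i.val - 1, hj'⟩ j := by
      intro B
      rw [sigmaM_eq]
      unfold preQ
      refine Finset.sum_congr rfl fun k _ => Finset.sum_congr rfl fun l _ => ?_
      have : k < i ↔ k ≤ ⟨i.val - 1, hj'⟩ := by
        rw [Fin.lt_def, Fin.le_def]
        simp only
        omega
      simp [this]
    rw [key, key]
    exact h _ _

lemma preP_split {n : ℕ} (A : Matrix (Fin n) (Fin n) ℕ) (i j : Fin n) :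
    preP A i j = (∑ k, ∑ l, if k < i ∧ l < j then A k l else 0)
      + ∑ l, if l < j then A i l else 0 := by
  unfold preP
  have : (∑ l, if l < j then A i l else 0)
      = ∑ k, if k = i then (∑ l, if l < j then A k l else 0) else 0 := by simp
  rw [this, ← Finset.sum_add_distrib]
  refine Finset.sum_congr rfl fun k _ => ?_
  rcases lt_trichotomy k i with hk | hk | hk
  · simp [hk, hk.le, hk.ne]
  · simp [hk]
  · simp [hk.not_ge, hk.not_gt, hk.ne']

lemma row_split {n : ℕ} (A : Matrix (Fin n) (Fin n) ℕ) (hA : A ∈ classA n 2) (i j : Fin n) :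
    (∑ l, if l < j then A i l else 0) + A i j + (∑ l, if j < l then A i l else 0) = 2 := by
  have h : ∑ l, A i l = 2 := hA.2.1 i
  rw [← h]
  have : A i j = ∑ l, if l = j then A i l else 0 := by simp
  rw [this, ← Finset.sum_add_distrib, ← Finset.sum_add_distrib]
  refine Finset.sum_congr rfl fun l _ => ?_
  rcases lt_trichotomy l j with hk | hk | hk
  · simp [hk, hk.ne, hk.not_gt]
  · simp [hk]
  · simp [hk, hk.ne', hk.not_gt]

lemma biN_strict {n : ℕ} {A C : Matrix (Fin n) (Fin n) ℕ} (hA : A ∈ classA n 2)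
    (hC : C ∈ classA n 2) (h : brle A C) (hne : A ≠ C) : biN A A < biN C C := by
  classical
  have hT : ∀ i j, lowT A i j ≤ lowT C i j := by
    intro i j
    have h1 := lowT_add A hA i j
    have h2 := lowT_add C hC i j
    have h3 := preP_le h i j
    omega
  have hU : ∀ i j, upU A i j ≤ upU C i j := by
    intro i j
    have h1 := upU_add A hA i j
    have h2 := upU_add C hC i j
    have h3 := preQ_le h i j
    omega
  have hex : ∃ i j, 0 < C i j ∧ lowT A i j < lowT C i j := by
    have hr : ∃ i : Fin n, ∃ j, A i j ≠ C i j := by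
      by_contra hcon
      push Not at hcon
      exact hne (by ext i j; exact hcon i j)
    obtain ⟨i, hi, himin⟩ := (Finset.univ.filter fun i : Fin n => ∃ j, A i j ≠ C i j).exists_min_image
      id (by obtain ⟨i, hi⟩ := hr; exact ⟨i, by simpa using hi⟩)
    rw [Finset.mem_filter] at hi
    obtain ⟨j, hj, hjmax⟩ := (Finset.univ.filter fun j : Fin n => A i j ≠ C i j).exists_max_image
      id (by obtain ⟨j, hj⟩ := hi.2; exact ⟨j, by simpa using hj⟩)
    rw [Finset.mem_filter] at hj
    have hrows : ∀ k < i, ∀ l, A k l = C k l := by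
      intro k hk l
      by_contra hc
      have := himin k (by simp only [Finset.mem_filter, Finset.mem_univ, true_and]; exact ⟨l, hc⟩)
      exact absurd hk (not_lt.mpr this)
    have hcols : ∀ l, j < l → A i l = C i l := by
      intro l hl
      by_contra hc
      have := hjmax l (by simp only [Finset.mem_filter, Finset.mem_univ, true_and]; exact hc)
      exact absurd hl (not_lt.mpr this)
    have e1 := row_split A hA i j
    have e2 := row_split C hC i j
    have e3 : (∑ l, if j < l then A i l else 0) = ∑ l, if j < l then C i l else 0 := by
      refine Finset.sum_congr rfl fun l _ => ?_
      split_ifs with hl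
      · exact hcols l hl
      · rfl
    have e4 : (∑ k, ∑ l, if k < i ∧ l < j then A k l else 0)
        = ∑ k, ∑ l, if k < i ∧ l < j then C k l else 0 := by
      refine Finset.sum_congr rfl fun k _ => Finset.sum_congr rfl fun l _ => ?_
      split_ifs with hl
      · exact hrows k hl.1 l
      · rfl
    have e5 := preP_split A i j
    have e6 := preP_split C i j
    have e7 := preP_le h i j
    have h1 := lowT_add A hA i j
    have h2 := lowT_add C hC i j
    have h3 := hj.2
    exact ⟨i, j, by omega, by omega⟩
  obtain ⟨i, j, hpos, hlt⟩ := hex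
  calc biN A A = ∑ k, ∑ l, A k l * upU A k l := biN_right A A
    _ ≤ ∑ k, ∑ l, A k l * upU C k l :=
        Finset.sum_le_sum fun k _ => Finset.sum_le_sum fun l _ => Nat.mul_le_mul_left _ (hU k l)
    _ = biN C A := (biN_right C A).symm
    _ = ∑ i, ∑ j, C i j * lowT A i j := biN_left C A
    _ < ∑ i, ∑ j, C i j * lowT C i j := by
        refine Finset.sum_lt_sum (fun i _ => Finset.sum_le_sum fun j _ =>
          Nat.mul_le_mul_left _ (hT i j)) ⟨i, Finset.mem_univ _, ?_⟩
        exact Finset.sum_lt_sum (fun j _ => Nat.mul_le_mul_left _ (hT i j))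
          ⟨j, Finset.mem_univ _, Nat.mul_lt_mul_of_pos_left hlt hpos⟩
    _ = biN C C := (biN_left C C).symm

lemma row_touch {n : ℕ} (A : Matrix (Fin n) (Fin n) ℕ) (hA : A ∈ classA n 2) (i : Fin n) :
    1 ≤ (∑ j, A i j * lowT A i j) + ∑ j, A i j * upU A i j := by
  by_contra hcon
  have hz : (∑ j, A i j * lowT A i j) = 0 ∧ (∑ j, A i j * upU A i j) = 0 := by omega
  obtain ⟨hz1, hz2⟩ := hz
  simp only [Finset.sum_eq_zero_iff, Finset.mem_univ, true_implies, mul_eq_zero] at hz1 hz2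
  have hrow : ∑ j, A i j = 2 := hA.2.1 i
  -- first one in row i
  obtain ⟨j, hj, hjmin⟩ := (Finset.univ.filter fun j : Fin n => A i j ≠ 0).exists_min_image
      id (by
        by_contra hc
        rw [Finset.not_nonempty_iff_eq_empty, Finset.filter_eq_empty_iff] at hc
        have : ∑ j, A i j = 0 := Finset.sum_eq_zero fun j _ => by simpa using hc (Finset.mem_univ j)
        omega)
  rw [Finset.mem_filter] at hj
  have hjone : A i j = 1 := by rcases hA.1 i j with h | h; exact absurd h hj.2; exact h
  have hbefore : (∑ l, if l < j then A i l else 0) = 0 := by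
    refine Finset.sum_eq_zero fun l _ => ?_
    split_ifs with hl
    · by_contra hc
      have := hjmin l (by simp only [Finset.mem_filter, Finset.mem_univ, true_and]; exact hc)
      exact absurd hl (not_lt.mpr this)
    · rfl
  have hs := row_split A hA i j
  obtain ⟨l, hjl, hl⟩ : ∃ l, j < l ∧ A i l ≠ 0 := by
    by_contra hc
    push Not at hc
    have : (∑ l, if j < l then A i l else 0) = 0 := by
      refine Finset.sum_eq_zero fun l _ => ?_
      split_ifs with hl
      · exact hc l hl
      · rfl
    omega
  have hup : ∀ k c, k < i → j < c → A k c = 0 := by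
    intro k c hk hc
    have := (hz2 j).resolve_left hj.2
    simp only [upU, Finset.sum_eq_zero_iff, Finset.mem_univ, true_implies] at this
    simpa [hk, hc] using this k c
  have hlow : ∀ k c, i < k → c < l → A k c = 0 := by
    intro k c hk hc
    have := (hz1 l).resolve_left hl
    simp only [lowT, Finset.sum_eq_zero_iff, Finset.mem_univ, true_implies] at this
    simpa [hk, hc] using this k c
  have c1 : (∑ c, ∑ r, if c ≤ j then A r c else 0) = 2 * ∑ c : Fin n, if c ≤ j then 1 else 0 := by
    rw [Finset.mul_sum]
    refine Finset.sum_congr rfl fun c _ => ?_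
    have h : ∑ r, A r c = 2 := hA.2.2 c
    split_ifs
    · simpa using h
    · simp
  have c2 : (∑ c, ∑ r, if c ≤ j then A r c else 0)
      = ∑ r : Fin n, ((if r < i then 2 else 0) + if r = i then 1 else 0) := by
    rw [Finset.sum_comm]
    refine Finset.sum_congr rfl fun r _ => ?_
    rcases lt_trichotomy r i with hr | hr | hr
    · simp only [hr, hr.ne, if_true, if_false, add_zero]
      have h : ∑ c, A r c = 2 := hA.2.1 r
      rw [← h]
      refine Finset.sum_congr rfl fun c _ => ?_
      split_ifs with hc
      · rfl
      · exact (hup r c hr (not_le.mp hc)).symm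
    · subst hr
      simp only [lt_irrefl, if_true, if_false, zero_add]
      have : (∑ c, if c ≤ j then A r c else 0)
          = (∑ c, if c < j then A r c else 0) + ∑ c, if c = j then A r c else 0 := by
        rw [← Finset.sum_add_distrib]
        refine Finset.sum_congr rfl fun c _ => ?_
        rcases lt_trichotomy c j with hk | hk | hk
        · simp [hk, hk.le, hk.ne]
        · simp [hk]
        · simp [hk.not_ge, hk.not_gt, hk.ne']
      rw [this, hbefore]
      simp [hjone]
    · simp only [hr.not_gt, hr.ne', if_false, add_zero]
      refine Finset.sum_eq_zero fun c _ => ?_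
      split_ifs with hc
      · exact hlow r c hr (lt_of_le_of_lt hc hjl)
      · rfl
  have c3 : (∑ r : Fin n, if r < i then 2 else 0) = 2 * ∑ r : Fin n, if r < i then 1 else 0 := by
    rw [Finset.mul_sum]
    refine Finset.sum_congr rfl fun c _ => ?_
    split_ifs <;> rfl
  rw [Finset.sum_add_distrib, c3] at c2
  simp only [Finset.sum_ite_eq', Finset.mem_univ, if_true] at c2
  omega

lemma biN_lower {n : ℕ} (A : Matrix (Fin n) (Fin n) ℕ) (hA : A ∈ classA n 2) :
    n ≤ 2 * biN A A := by
  have h : ∑ _i : Fin n, 1 ≤ ∑ i : Fin n, ((∑ j, A i j * lowT A i j) + ∑ j, A i j * upU A i j) :=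
    Finset.sum_le_sum fun i _ => row_touch A hA i
  rw [Finset.sum_add_distrib, ← biN_left, ← biN_right] at h
  simp at h
  omega

lemma sq_sum {n : ℕ} (x : Fin n → ℕ) :
    2 * (∑ i, ∑ k, if i < k then x i * x k else 0) + ∑ i, x i * x i = (∑ i, x i) * ∑ i, x i := by
  have e : (∑ i, ∑ k, if i < k then x i * x k else 0)
      = ∑ i, ∑ k, if k < i then x i * x k else 0 := by
    rw [Finset.sum_comm]
    refine Finset.sum_congr rfl fun i _ => Finset.sum_congr rfl fun k _ => ?_
    rw [mul_comm]
  have e2 : ∑ i, x i * x i = ∑ i, ∑ k, if i = k then x i * x k else 0 := by simp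
  rw [two_mul]
  nth_rewrite 2 [e]
  rw [e2, Finset.sum_mul_sum, ← Finset.sum_add_distrib, ← Finset.sum_add_distrib]
  refine Finset.sum_congr rfl fun i _ => ?_
  rw [← Finset.sum_add_distrib, ← Finset.sum_add_distrib]
  refine Finset.sum_congr rfl fun k _ => ?_
  rcases lt_trichotomy i k with hk | hk | hk
  · simp [hk, hk.ne, hk.not_gt]
  · simp [hk]
  · simp [hk, hk.ne', hk.not_gt]

lemma conj_mem {n : ℕ} (A : Matrix (Fin n) (Fin n) ℕ) (hA : A ∈ classA n 2) :
    conjM A ∈ classA n 2 := by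
  refine ⟨fun i j => hA.1 i j.rev, fun i => ?_, fun j => hA.2.2 j.rev⟩
  have h := hA.2.1 i
  rw [← h]
  exact Equiv.sum_comp Fin.revPerm (fun j => A i j)

lemma biN_conj {n : ℕ} (A : Matrix (Fin n) (Fin n) ℕ) :
    biN (conjM A) (conjM A) = ∑ i, ∑ j, ∑ k, ∑ l, if i < k ∧ j < l then A i j * A k l else 0 := by
  unfold biN conjM
  refine Finset.sum_congr rfl fun i _ => ?_
  rw [← Equiv.sum_comp Fin.revPerm]
  refine Finset.sum_congr rfl fun j _ => Finset.sum_congr rfl fun k _ => ?_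
  rw [← Equiv.sum_comp Fin.revPerm]
  refine Finset.sum_congr rfl fun l _ => ?_
  simp

lemma biN_total {n : ℕ} (A : Matrix (Fin n) (Fin n) ℕ) (hA : A ∈ classA n 2) :
    biN A A + biN (conjM A) (conjM A) + 3 * n = 2 * n * n := by
  have t : biN A A + biN (conjM A) (conjM A)
      + (∑ j, ∑ i, ∑ k, if i < k then A i j * A k j else 0)
      = ∑ i, ∑ k, if i < k then (∑ j, A i j) * (∑ l, A k l) else 0 := by
    rw [biN_conj]
    unfold biN
    rw [Finset.sum_comm (f := fun j i => ∑ k, if i < k then A i j * A k j else 0),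
      ← Finset.sum_add_distrib, ← Finset.sum_add_distrib]
    refine Finset.sum_congr rfl fun i _ => ?_
    have : (∑ k, if i < k then (∑ j, A i j) * (∑ l, A k l) else 0)
        = ∑ j, ∑ k, ∑ l, if i < k then A i j * A k l else 0 := by
      rw [Finset.sum_comm]
      refine Finset.sum_congr rfl fun k _ => ?_
      split_ifs
      · rw [Finset.sum_mul_sum]
      · simp
    rw [this, ← Finset.sum_add_distrib, ← Finset.sum_add_distrib]
    refine Finset.sum_congr rfl fun j _ => ?_
    rw [← Finset.sum_add_distrib, ← Finset.sum_add_distrib]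
    refine Finset.sum_congr rfl fun k _ => ?_
    have : (if i < k then A i j * A k j else 0)
        = ∑ l, if l = j then (if i < k then A i j * A k l else 0) else 0 := by simp
    rw [this, ← Finset.sum_add_distrib, ← Finset.sum_add_distrib]
    refine Finset.sum_congr rfl fun l _ => ?_
    rcases lt_trichotomy l j with hk | hk | hk
    · simp [hk, hk.ne, hk.not_gt]
    · simp [hk]
    · simp [hk, hk.ne', hk.not_gt]
  have r : ∀ i, ∑ j, A i j = 2 := hA.2.1
  have s : ∀ j, (∑ i, ∑ k, if i < k then A i j * A k j else 0) = 1 := by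
    intro j
    have h := sq_sum (fun i => A i j)
    have hc : ∑ i, A i j = 2 := hA.2.2 j
    have hsq : ∑ i, A i j * A i j = 2 := by
      rw [← hc]
      refine Finset.sum_congr rfl fun i _ => ?_
      rcases hA.1 i j with h | h <;> simp [h]
    simp only [hc, hsq] at h
    omega
  simp only [r, s] at t
  have h2 := sq_sum (fun _ : Fin n => 2)
  simp at h2 t
  nlinarith

lemma classA_finite (n : ℕ) : (classA n 2).Finite := by
  have : (Set.univ.pi fun _ : Fin n => Set.univ.pi fun _ : Fin n => ({0, 1} : Set ℕ)).Finite :=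
    Set.Finite.pi fun _ => Set.Finite.pi fun _ => by simp
  refine this.subset ?_
  intro A hA i _ j _
  simpa using hA.1 i j

/-- For `n ≥ 3`, with `ε = 0` if `n` is odd and `ε = 1` if `n`
is even, the width of the Bruhat order of `A(n,2)` is at least
`|A(n,2)| / (2n(n−2) + ε)`: there is an antichain at least that large. -/
theorem width_lower_bound_average (n : ℕ) (hn : 3 ≤ n) :
    ∃ D : Set (Matrix (Fin n) (Fin n) ℕ), D ⊆ classA n 2 ∧ IsAntichainB D ∧
      ((classA n 2).ncard : ℚ) / ((2*n*(n-2) + if Even n then 1 else 0 : ℕ) : ℚ)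
        ≤ (D.ncard : ℚ) := by
  classical
  obtain ⟨S, hS⟩ := (classA_finite n).exists_finset_coe
  have hmem : ∀ A, A ∈ S ↔ A ∈ classA n 2 := fun A => by rw [← hS]; simp
  set K : ℕ := 2*n*(n-2) + if Even n then 1 else 0 with hK
  have hnn : 2 * n * (n - 2) + 4 * n = 2 * n * n := by
    obtain ⟨m, rfl⟩ : ∃ m, n = m + 2 := ⟨n - 2, by omega⟩
    simp only [Nat.add_sub_cancel]
    ring
  have hKpos : 0 < K := by
    have : 0 < 2 * n * (n - 2) := Nat.mul_pos (by omega) (by omega)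
    omega
  let T := Finset.Ico ((n + 1) / 2) ((n + 1) / 2 + K)
  have hmaps : ∀ A ∈ S, biN A A ∈ T := by
    intro A hA
    have hA' := (hmem A).1 hA
    have h1 := biN_lower A hA'
    have h2 := biN_lower _ (conj_mem A hA')
    have h3 := biN_total A hA'
    rw [Finset.mem_Ico]
    by_cases he : Even n
    · simp only [he, if_true] at hK
      obtain ⟨m, hm⟩ := he
      omega
    · simp only [he, if_false] at hK
      obtain ⟨m, hm⟩ := Nat.not_even_iff_odd.1 he
      omega
  have hT : T.card = K := by simp [T]
  obtain ⟨v, _, hv⟩ := T.exists_max_image (fun v => (S.filter fun A => biN A A = v).card)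
    (Finset.card_pos.1 (by omega))
  refine ⟨↑(S.filter fun A => biN A A = v), ?_, ?_, ?_⟩
  · intro A hA
    rw [Finset.mem_coe, Finset.mem_filter] at hA
    exact (hmem A).1 hA.1
  · intro A hA C hC hne
    rw [Finset.mem_coe, Finset.mem_filter] at hA hC
    have hA1 := (hmem A).1 hA.1
    have hC1 := (hmem C).1 hC.1
    constructor
    · intro h
      have := biN_strict hA1 hC1 h hne
      omega
    · intro h
      have := biN_strict hC1 hA1 h hne.symm
      omega
  · have h := Finset.card_le_mul_card_image_of_maps_to hmaps _ hv
    rw [hT] at h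
    rw [← hS, Set.ncard_coe_finset, Set.ncard_coe_finset, div_le_iff₀ (by exact_mod_cast hKpos)]
    exact_mod_cast h
end

section
/- The width of the Bruhat order of A(4,2) equals 13; that is, the maximum cardinality of a set of pairwise incomparable matrices in A(4,2) is 13. -/
open Finset

/-- The six 0-1 rows of length four with sum two. -/
def rowOf : ℕ → Fin 4 → ℕ
  | 0 => ![1, 1, 0, 0]
  | 1 => ![1, 0, 1, 0]
  | 2 => ![1, 0, 0, 1]
  | 3 => ![0, 1, 1, 0]
  | 4 => ![0, 1, 0, 1]
  | _ => ![0, 0, 1, 1]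

/-- The matrix whose four rows are the base-six digits of `c`. -/
def matOf (c : ℕ) : Matrix (Fin 4) (Fin 4) ℕ :=
  ![rowOf (c / 216), rowOf (c / 36 % 6), rowOf (c / 6 % 6), rowOf (c % 6)]

/-- Entries of `matOf c`. -/
def entryOf (c : ℕ) (i j : Fin 4) : ℕ := matOf c i j

/-- A partition of `A(4,2)` into 13 chains. -/
def chainsA : List (List ℕ) :=
  [[35, 65, 70, 105, 175, 205, 210, 420, 1140],
   [95, 155, 185, 190, 195, 735, 915, 945, 1155],
   [125, 140, 200, 380, 560, 565, 570, 1170],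
   [245, 250, 280, 310, 315, 375, 555, 585, 595, 955, 1015, 1045, 1225],
   [340, 350, 385, 390, 750, 930, 1110],
   [365, 370, 400, 1120],
   [455, 465, 495, 525, 615, 630, 1260],
   [490, 550, 910, 920, 1100],
   [545, 905, 1085, 1090, 1095],
   [665, 680, 740, 745, 805, 985, 1200],
   [700, 710, 770, 830, 840, 1050, 1230],
   [725, 730, 800, 980, 1190],
   [875, 895, 925, 1105]]

/-- An antichain of size 13. -/
def antiA : List ℕ := [420, 570, 595, 615, 750, 805, 830, 925, 945, 980, 1095, 1100, 1120]

instance decBrle (A C : Matrix (Fin 4) (Fin 4) ℕ) : Decidable (brle A C) := by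
  unfold brle; infer_instance

theorem brle_tr {A B C : Matrix (Fin 4) (Fin 4) ℕ} (h : brle A B) (k : brle B C) : brle A C :=
  fun i j => (k i j).trans (h i j)

theorem chains_ok : ∀ l ∈ chainsA, l.IsChain (fun a c => brle (matOf a) (matOf c)) := by
  decide +kernel

theorem chains_pw (l : List ℕ) (hl : l ∈ chainsA) (a c : ℕ) (ha : a ∈ l) (hc : c ∈ l) :
    brle (matOf a) (matOf c) ∨ brle (matOf c) (matOf a) := by
  have : IsTrans ℕ (fun a c => brle (matOf a) (matOf c)) := ⟨fun _ _ _ h k => brle_tr h k⟩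
  have h := (chains_ok l hl).pairwise
  have h2 : l.Pairwise (fun a c => brle (matOf a) (matOf c) ∨ brle (matOf c) (matOf a)) :=
    h.imp Or.inl
  have : Std.Symm (fun a c => brle (matOf a) (matOf c) ∨ brle (matOf c) (matOf a)) :=
    ⟨fun _ _ h => h.symm⟩
  have hrefl : ∀ x ∈ l, brle (matOf x) (matOf x) ∨ brle (matOf x) (matOf x) :=
    fun x _ => Or.inl fun i j => le_rfl
  exact List.Pairwise.forall_of_forall hrefl h2 ha hc

theorem row_cases (r : Fin 4 → ℕ) (h : ∀ j, r j = 0 ∨ r j = 1) (hs : ∑ j, r j = 2) :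
    ∃ a : Fin 6, r = rowOf a := by
  have hr : r = ![r 0, r 1, r 2, r 3] := by ext j; fin_cases j <;> rfl
  rw [Fin.sum_univ_four] at hs
  rcases h 0 with h0 | h0 <;> rcases h 1 with h1 | h1 <;> rcases h 2 with h2 | h2 <;>
    rcases h 3 with h3 | h3 <;> rw [h0, h1, h2, h3] at hs hr <;> first
      | omega
      | exact ⟨0, hr⟩
      | exact ⟨1, hr⟩
      | exact ⟨2, hr⟩
      | exact ⟨3, hr⟩
      | exact ⟨4, hr⟩
      | exact ⟨5, hr⟩

theorem complete_aux : ∀ a b c d : Fin 6,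
    (∀ j : Fin 4, rowOf a j + rowOf b j + rowOf c j + rowOf d j = 2) →
    ∃ i : Fin 13, (a * 216 + b * 36 + c * 6 + d : ℕ) ∈ chainsA.getD i [] := by
  decide +kernel

theorem complete_A (A : Matrix (Fin 4) (Fin 4) ℕ) (hA : A ∈ classA 4 2) :
    ∃ i : Fin 13, ∃ c ∈ chainsA.getD i [], A = matOf c := by
  obtain ⟨hz, hr, hc⟩ := hA
  obtain ⟨a, ha⟩ := row_cases (A 0) (hz 0) (hr 0)
  obtain ⟨b, hb⟩ := row_cases (A 1) (hz 1) (hr 1)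
  obtain ⟨c, hc'⟩ := row_cases (A 2) (hz 2) (hr 2)
  obtain ⟨d, hd⟩ := row_cases (A 3) (hz 3) (hr 3)
  obtain ⟨i, hi⟩ := complete_aux a b c d (fun j => by
    have := hc j
    rw [colSum, Fin.sum_univ_four, ha, hb, hc', hd] at this
    exact this)
  refine ⟨i, _, hi, ?_⟩
  have e1 : (a * 216 + b * 36 + c * 6 + d : ℕ) / 216 = a := by omega
  have e2 : (a * 216 + b * 36 + c * 6 + d : ℕ) / 36 % 6 = b := by omega
  have e3 : (a * 216 + b * 36 + c * 6 + d : ℕ) / 6 % 6 = c := by omega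
  have e4 : (a * 216 + b * 36 + c * 6 + d : ℕ) % 6 = d := by omega
  unfold matOf
  rw [e1, e2, e3, e4, ← ha, ← hb, ← hc', ← hd]
  funext k
  fin_cases k <;> rfl

theorem chain_mem : ∀ i : Fin 13, chainsA.getD i [] ∈ chainsA := by decide +kernel

theorem anti_mem : ∀ c ∈ antiA, (∀ i j, entryOf c i j ≤ 1) ∧ (∀ i, rowSum (matOf c) i = 2) ∧
    (∀ j, colSum (matOf c) j = 2) := by decide +kernel

theorem anti_inc : ∀ a ∈ antiA, ∀ c ∈ antiA, a ≠ c → ¬ brle (matOf a) (matOf c) := by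
  decide +kernel

/-- The width of the Bruhat order of `A(4,2)` equals `13`:
there is an antichain of size `13`, and every antichain has size at most `13`. -/
theorem width_A42_eq_thirteen :
    (∃ D : Set (Matrix (Fin 4) (Fin 4) ℕ),
        D ⊆ classA 4 2 ∧ IsAntichainB D ∧ D.ncard = 13)
    ∧ (∀ D : Set (Matrix (Fin 4) (Fin 4) ℕ),
        D ⊆ classA 4 2 → IsAntichainB D → D.ncard ≤ 13) := by
  constructor
  · refine ⟨Set.image matOf (antiA.toFinset : Set ℕ), ?_, ?_, ?_⟩
    · rintro _ ⟨c, hc, rfl⟩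
      have h := anti_mem c (by simpa using hc)
      exact ⟨fun i j => by have := h.1 i j; unfold entryOf at this; omega, h.2⟩
    · rintro _ ⟨a, ha, rfl⟩ _ ⟨c, hc, rfl⟩ hne
      have ha' : a ∈ antiA := by simpa using ha
      have hc' : c ∈ antiA := by simpa using hc
      have h : a ≠ c := fun h => hne (by rw [h])
      exact ⟨anti_inc a ha' c hc' h, anti_inc c hc' a ha' h.symm⟩
    · rw [Set.InjOn.ncard_image, Set.ncard_coe_finset]
      · decide +kernel
      · intro a ha c hc h
        by_contra hne
        refine anti_inc a (by simpa using ha) c (by simpa using hc) hne ?_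
        have h' : matOf a = matOf c := h
        rw [h']
        exact fun i j => le_rfl
  · intro D hD hanti
    choose f g hg hfg using fun A : D => complete_A A.1 (hD A.2)
    have hinj : Function.Injective f := by
      intro A C hAC
      by_contra hne
      have hi := hanti A A.2 C C.2 (fun h => hne (Subtype.ext h))
      have h := chains_pw _ (chain_mem (f A)) (g A) (g C) (hg A) (hAC ▸ hg C)
      rw [← hfg A, ← hfg C] at h
      exact h.elim hi.1 hi.2
    have := Nat.card_le_card_of_injective f hinj
    simpa using this
end
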